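/- There is an absolute constant C > 0 such that for every real k ≥ 2 and every ε ∈ (0,1) there exists a finite set L of affine functions with |L| ≤ C·ε^{−1/2}·(1 + log₂(1 + log₂(1/ε))), such that every g ∈ L satisfies g(x) ≥ x·(k−x) for all x ∈ [0, k], and for every x ∈ [1, k/2] there exists g ∈ L with g(x) ≤ (1+ε)·x·(k−x). In particular, the clique splitting penalties of a k-node hyperedge can be (1+ε)-covered with O(ε^{−1/2}·log log(1/ε)) linear pieces, independent of k. -/

import Mathlib

/-!
The tangent line to `ζ(x) = x(k - x)` at `y` exceeds `ζ` at `x` by exactly `(x - y)²`, so it covers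
`x` up to the factor `1 + ε` as soon as `(x - y)² ≤ ε ζ(x)`. For `0 ≤ x ≤ k/2` we have
`ζ(x) ≥ kx/2`, so the admissible distance `|x - y|` grows like `√x`, and tangency points that are
equally spaced after taking square roots suffice: write `x = (εk/8) t²` and take
`y = (εk/8) ⌊t⌋²`. Then `|t² - ⌊t⌋²| ≤ 2t` is the required estimate, and `x ≤ k/2` forces
`t ≤ 2/√ε`. Hence `O(ε^{-1/2})` lines already suffice, without the double logarithm.
-/

/-- The tangent line to the clique splitting penalty `x ↦ x * (k - x)` at `y`, encoded as the pair
(slope, intercept). -/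
def cliqueTangent (k y : ℝ) : ℝ × ℝ := (k - 2 * y, y ^ 2)

/-- The tangent lines to the clique splitting penalty at the points `(εk/8) n²` for `n ≤ 2/√ε`,
which `(1+ε)`-cover it on `[0, k/2]`. -/
noncomputable def cliqueTangents (k ε : ℝ) : Finset (ℝ × ℝ) :=
  (Finset.range (⌊2 / √ε⌋₊ + 1)).image fun n : ℕ ↦ cliqueTangent k (ε * k / 8 * (n : ℝ) ^ 2)

lemma abs_sq_sub_natFloor_sq_le {R : Type*} [CommRing R] [LinearOrder R] [IsStrictOrderedRing R]
    [FloorSemiring R] {t : R} (ht : 0 ≤ t) : |t ^ 2 - (⌊t⌋₊ : R) ^ 2| ≤ 2 * t := by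
  have floor_nonneg : (0 : R) ≤ ⌊t⌋₊ := Nat.cast_nonneg _
  have floor_le : (⌊t⌋₊ : R) ≤ t := Nat.floor_le ht
  have sub_floor_le_one : t - ⌊t⌋₊ ≤ 1 := by linarith [Nat.lt_floor_add_one t]
  calc |t ^ 2 - (⌊t⌋₊ : R) ^ 2| = (t - ⌊t⌋₊) * (t + ⌊t⌋₊) := by
        rw [abs_of_nonneg (sub_nonneg.2 (pow_le_pow_left₀ floor_nonneg floor_le 2))]
        ring
    _ ≤ 1 * (t + t) := by gcongr
    _ = 2 * t := by ring

lemma cliqueTangent_eval (k y x : ℝ) :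
    (cliqueTangent k y).1 * x + (cliqueTangent k y).2 = x * (k - x) + (x - y) ^ 2 := by
  simp only [cliqueTangent]
  ring

lemma le_cliqueTangent_eval (k y x : ℝ) :
    x * (k - x) ≤ (cliqueTangent k y).1 * x + (cliqueTangent k y).2 := by
  rw [cliqueTangent_eval]
  exact le_add_of_nonneg_right (sq_nonneg _)

lemma cliqueTangent_eval_le_iff {k ε x y : ℝ} :
    (cliqueTangent k y).1 * x + (cliqueTangent k y).2 ≤ (1 + ε) * (x * (k - x)) ↔
      (x - y) ^ 2 ≤ ε * (x * (k - x)) := by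
  rw [cliqueTangent_eval, add_mul, one_mul, add_le_add_iff_left]

lemma card_cliqueTangents_le (k ε : ℝ) : ((cliqueTangents k ε).card : ℝ) ≤ 2 / √ε + 1 := by
  calc ((cliqueTangents k ε).card : ℝ) ≤ ((⌊2 / √ε⌋₊ + 1 : ℕ) : ℝ) := by
        exact_mod_cast Finset.card_image_le.trans_eq (Finset.card_range _)
    _ ≤ 2 / √ε + 1 := by
        push_cast
        gcongr
        exact Nat.floor_le (by positivity)

lemma cliqueTangent_natFloor_sq_eval_le {k ε t x : ℝ} (hε : 0 ≤ ε) (ht : 0 ≤ t)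
    (hx : x ∈ Set.Icc 0 (k / 2)) (hxt : x = ε * k / 8 * t ^ 2) :
    (cliqueTangent k (ε * k / 8 * (⌊t⌋₊ : ℝ) ^ 2)).1 * x +
        (cliqueTangent k (ε * k / 8 * (⌊t⌋₊ : ℝ) ^ 2)).2 ≤ (1 + ε) * (x * (k - x)) := by
  obtain ⟨hx_nonneg, hx_le⟩ := hx
  rw [cliqueTangent_eval_le_iff]
  calc (x - ε * k / 8 * (⌊t⌋₊ : ℝ) ^ 2) ^ 2
      = (ε * k / 8) ^ 2 * |t ^ 2 - (⌊t⌋₊ : ℝ) ^ 2| ^ 2 := by rw [sq_abs, hxt]; ring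
    _ ≤ (ε * k / 8) ^ 2 * (2 * t) ^ 2 := by gcongr; exact abs_sq_sub_natFloor_sq_le ht
    _ = ε * (x * (k - k / 2)) := by rw [hxt]; ring
    _ ≤ ε * (x * (k - x)) := by gcongr

lemma exists_mem_cliqueTangents_eval_le {k ε x : ℝ} (hk : 0 < k) (hε : 0 < ε)
    (hx : x ∈ Set.Icc 0 (k / 2)) :
    ∃ g ∈ cliqueTangents k ε, g.1 * x + g.2 ≤ (1 + ε) * (x * (k - x)) := by
  obtain ⟨t, ht, hxt⟩ : ∃ t : ℝ, 0 ≤ t ∧ x = ε * k / 8 * t ^ 2 := by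
    refine ⟨√(x / (ε * k / 8)), Real.sqrt_nonneg _, ?_⟩
    rw [Real.sq_sqrt (div_nonneg hx.1 (by positivity))]
    field_simp
  have sq_mul_le : t ^ 2 * ε ≤ 4 :=
    le_of_mul_le_mul_left (by linarith [hx.2] : k * (t ^ 2 * ε) ≤ k * 4) hk
  have t_le : t ≤ 2 / √ε := by
    rw [← sq_le_sq₀ ht (by positivity), div_pow, Real.sq_sqrt hε.le, le_div_iff₀ hε]
    linarith
  have floor_mem : ⌊t⌋₊ ∈ Finset.range (⌊2 / √ε⌋₊ + 1) :=
    Finset.mem_range_succ_iff.2 (Nat.floor_le_floor t_le)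
  exact ⟨_, Finset.mem_image_of_mem _ floor_mem,
    cliqueTangent_natFloor_sq_eval_le hε.le ht hx hxt⟩

theorem clique_loglog_cover_general {k ε : ℝ} (hk : 0 < k) (hε : 0 < ε) :
    ∃ L : Finset (ℝ × ℝ),
      (L.card : ℝ) ≤ 2 / √ε + 1 ∧
      (∀ g ∈ L, ∀ x : ℝ, x * (k - x) ≤ g.1 * x + g.2) ∧
      (∀ x ∈ Set.Icc (0 : ℝ) (k / 2),
        ∃ g ∈ L, g.1 * x + g.2 ≤ (1 + ε) * (x * (k - x))) := by
  refine ⟨cliqueTangents k ε, card_cliqueTangents_le k ε, ?_,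
    fun x hx ↦ exists_mem_cliqueTangents_eval_le hk hε hx⟩
  intro g hg x
  obtain ⟨n, -, rfl⟩ := Finset.mem_image.1 hg
  exact le_cliqueTangent_eval k _ x

lemma two_div_sqrt_add_one_le_mul_loglog {ε : ℝ} (hε : 0 < ε) (hε1 : ε ≤ 1) :
    2 / √ε + 1 ≤ 3 * (1 / √ε) * (1 + Real.logb 2 (1 + Real.logb 2 (1 / ε))) := by
  have one_le_inv_sqrt : 1 ≤ 1 / √ε :=
    one_le_one_div (Real.sqrt_pos.2 hε) (Real.sqrt_le_one.2 hε1)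
  have log_nonneg : 0 ≤ Real.logb 2 (1 / ε) :=
    Real.logb_nonneg one_lt_two (one_le_one_div hε hε1)
  have loglog_nonneg : 0 ≤ Real.logb 2 (1 + Real.logb 2 (1 / ε)) :=
    Real.logb_nonneg one_lt_two (le_add_of_nonneg_right log_nonneg)
  calc 2 / √ε + 1 ≤ 2 / √ε + 1 / √ε := by gcongr
    _ = 3 * (1 / √ε) := by ring
    _ ≤ 3 * (1 / √ε) * (1 + Real.logb 2 (1 + Real.logb 2 (1 / ε))) :=
        le_mul_of_one_le_right (by positivity) (le_add_of_nonneg_right loglog_nonneg)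

/-- **Covering the clique splitting penalty with `O(ε^{-1/2} log log (1/ε))` linear pieces
(Theorem 4.4).** There is an absolute constant `C > 0` such that for every real `k ≥ 2`
and every `ε ∈ (0,1)` there is a finite set `L` of affine functions with
`|L| ≤ C·ε^{-1/2}·(1 + log₂(1 + log₂(1/ε)))` such that every `g ∈ L` satisfies
`g(x) ≥ x(k-x)` on `[0,k]`, and every `x ∈ [1, k/2]` has some `g ∈ L` with
`g(x) ≤ (1+ε)·x(k-x)`. -/
theorem clique_loglog_cover :
    ∃ C : ℝ, 0 < C ∧
      ∀ k : ℝ, 2 ≤ k → ∀ ε : ℝ, 0 < ε → ε < 1 →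
      ∃ L : Finset (ℝ × ℝ),
        (L.card : ℝ) ≤ C * (1 / Real.sqrt ε) *
            (1 + Real.logb 2 (1 + Real.logb 2 (1 / ε))) ∧
        (∀ g ∈ L, ∀ x ∈ Set.Icc (0 : ℝ) k, x * (k - x) ≤ g.1 * x + g.2) ∧
        (∀ x ∈ Set.Icc (1 : ℝ) (k / 2),
          ∃ g ∈ L, g.1 * x + g.2 ≤ (1 + ε) * (x * (k - x))) := by
  refine ⟨3, three_pos, fun k hk ε hε hε1 ↦ ?_⟩
  obtain ⟨L, hcard, hupper, hcover⟩ := clique_loglog_cover_general (two_pos.trans_le hk) hε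
  exact ⟨L, hcard.trans (two_div_sqrt_add_one_le_mul_loglog hε hε1.le),
    fun g hg x _ ↦ hupper g hg x, fun x hx ↦ hcover x (Set.Icc_subset_Icc_left zero_le_one hx)⟩
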